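/- Let R be a regular language over the three-letter alphabet {□, b2, b1} (i.e., R is accepted by some deterministic finite automaton with finitely many states) such that R ⊆ {□^x b2 □^y b1 : x, y ∈ ℕ}. Then there exists an OCA C over the two-letter alphabet {b1, b2} such that L_vis(C) = {inc^{x+y} b1 dec^{y} b2 : x, y ∈ ℕ and □^x b2 □^y b1 ∈ R}. -/

import Mathlib

/-! Common framework: one-counter automata (OCAs) over a finite alphabet,
with the classical (`oca`), visibly (`vis`) and observability (`obs`) semantics. -/

/-- Letters from an alphabet `α` together with the two counter operations
`inc` and `dec`. -/
inductive Vis (α : Type*) : Type _ where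
  | sym : α → Vis α
  | inc : Vis α
  | dec : Vis α

/-- A one-counter automaton (an `m`-OCA) over alphabet `α` with state set `Q`:
an initial state, a set of final states, a threshold `m`, and a transition
relation `Δ ⊆ Q × {0,…,m} × (α ∪ {inc,dec}) × Q`. -/
structure OCA (Q : Type*) (α : Type*) where
  init : Q
  final : Set Q
  m : ℕ
  Δ : Set (Q × ℕ × Vis α × Q)
  valid : ∀ t ∈ Δ, t.2.1 ≤ m

variable {Q α : Type*}

/-- One step of an OCA, labeled by an element of `(α × ℕ) ∪ {inc, dec}`. -/
def OCA.step (A : OCA Q α) : Q × ℕ → Vis (α × ℕ) → Q × ℕ → Prop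
  | (q, x), Vis.inc, (q', x') => x' = x + 1 ∧ (q, min x A.m, Vis.inc, q') ∈ A.Δ
  | (q, x), Vis.dec, (q', x') => 1 ≤ x ∧ x' = x - 1 ∧ (q, min x A.m, Vis.dec, q') ∈ A.Δ
  | (q, x), Vis.sym (a, y), (q', x') => y = x ∧ x' = x ∧ (q, min x A.m, Vis.sym a, q') ∈ A.Δ

/-- `A.RunFrom c ts cs` holds if there is a partial run of `A` starting in
configuration `c`, with trace `ts`, visiting exactly the configurations
listed in `cs` (starting with `c`). -/
inductive OCA.RunFrom (A : OCA Q α) : Q × ℕ → List (Vis (α × ℕ)) → List (Q × ℕ) → Prop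
  | nil (c : Q × ℕ) : OCA.RunFrom A c [] [c]
  | cons {c c' : Q × ℕ} {τ : Vis (α × ℕ)} {ts : List (Vis (α × ℕ))} {cs : List (Q × ℕ)} :
      A.step c τ c' → OCA.RunFrom A c' ts cs → OCA.RunFrom A c (τ :: ts) (c :: cs)

/-- `ts` is the trace of some accepting run of `A` (a run starting in the
initial configuration `(ι,0)` whose last configuration has a final state). -/
def OCA.AccTrace (A : OCA Q α) (ts : List (Vis (α × ℕ))) : Prop :=
  ∃ cs c, A.RunFrom (A.init, 0) ts cs ∧ cs.getLast? = some c ∧ c.1 ∈ A.final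

/-- Projection of a trace letter used for the visibly semantics:
`(a,x)` becomes `a`, and `inc`/`dec` are kept. -/
def visOf : Vis (α × ℕ) → Vis α
  | Vis.sym (a, _) => Vis.sym a
  | Vis.inc => Vis.inc
  | Vis.dec => Vis.dec

/-- The visibly projection of a trace. -/
def visMap (ts : List (Vis (α × ℕ))) : List (Vis α) := ts.map visOf

/-- The observability projection of a trace: keep the pairs `(a,x)`,
erase `inc`/`dec`. -/
def obsMap (ts : List (Vis (α × ℕ))) : List (α × ℕ) :=
  ts.filterMap fun τ => match τ with
    | Vis.sym p => some p
    | _ => none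

/-- The classical projection of a trace: `(a,x)` becomes `a`,
`inc`/`dec` are erased. -/
def ocaMap (ts : List (Vis (α × ℕ))) : List α :=
  ts.filterMap fun τ => match τ with
    | Vis.sym (a, _) => some a
    | _ => none

/-- The visibly semantics `L_vis(A)`. -/
def OCA.Lvis (A : OCA Q α) : Set (List (Vis α)) :=
  {w | ∃ ts, A.AccTrace ts ∧ visMap ts = w}

/-- The observability semantics `L_obs(A)`. -/
def OCA.Lobs (A : OCA Q α) : Set (List (α × ℕ)) :=
  {w | ∃ ts, A.AccTrace ts ∧ obsMap ts = w}

/-- The classical semantics `L_oca(A)`. -/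
def OCA.Loca (A : OCA Q α) : Set (List α) :=
  {w | ∃ ts, A.AccTrace ts ∧ ocaMap ts = w}

/-- An OCA is deterministic if for every state `q`, counter test `k ≤ m` and
letter `σ ∈ α ∪ {inc,dec}` there is exactly one target state. -/
def OCA.Deterministic (A : OCA Q α) : Prop :=
  ∀ (q : Q) (k : ℕ) (σ : Vis α), k ≤ A.m → ∃! q' : Q, (q, k, σ, q') ∈ A.Δ

/-- Test for the letter `inc`. -/
def isIncB : Vis α → Bool
  | Vis.inc => true
  | _ => false

/-- Test for the letter `dec`. -/
def isDecB : Vis α → Bool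
  | Vis.dec => true
  | _ => false

/-- Well-formed words over `α ∪ {inc,dec}`: no prefix contains more `dec`'s
than `inc`'s. -/
def WFWords (α : Type*) : Set (List (Vis α)) :=
  {w | ∀ p, p <+: w → p.countP isDecB ≤ p.countP isIncB}

/-- `encFrom x0 w` encodes `w ∈ (α × ℕ)*` starting from previous counter
value `x0`: each `(a,x)` becomes `inc^(x-x0) a` (if `x ≥ x0`) or
`dec^(x0-x) a` (otherwise). -/
def encFrom : ℕ → List (α × ℕ) → List (Vis α)
  | _, [] => []
  | x0, (a, x) :: w =>
      (if x0 ≤ x then List.replicate (x - x0) Vis.inc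
       else List.replicate (x0 - x) Vis.dec) ++ Vis.sym a :: encFrom x w

/-- The encoding `enc : (α × ℕ)* → (α ∪ {inc,dec})*`. -/
def enc (w : List (α × ℕ)) : List (Vis α) := encFrom 0 w

/-- The set `Enc_α` of valid encodings. -/
def EncSet (α : Type*) : Set (List (Vis α)) := Set.range (enc (α := α))

/-- A set `S ⊆ ℕ` is ultimately periodic if there are `t` and `d ≥ 1` such
that for all `x ≥ t`, `x ∈ S ↔ x + d ∈ S`. -/
def UltPeriodic (S : Set ℕ) : Prop :=
  ∃ t d : ℕ, 1 ≤ d ∧ ∀ x : ℕ, t ≤ x → (x ∈ S ↔ x + d ∈ S)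

/-- An extended OCA (eOCA): transitions are guarded by ultimately periodic
sets of counter values, and acceptance is given by an ultimately periodic set
of counter values for each state. -/
structure EOCA (Q : Type*) (α : Type*) where
  init : Q
  f : Q → Set ℕ
  hf : ∀ q, UltPeriodic (f q)
  Δ : Set (Q × Set ℕ × Vis α × Q)
  hΔfin : Δ.Finite
  hΔup : ∀ t ∈ Δ, UltPeriodic t.2.1

/-- One step of an eOCA. -/
def EOCA.step (A : EOCA Q α) : Q × ℕ → Vis (α × ℕ) → Q × ℕ → Prop
  | (q, x), Vis.inc, (q', x') =>
      x' = x + 1 ∧ ∃ S, (q, S, Vis.inc, q') ∈ A.Δ ∧ x ∈ S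
  | (q, x), Vis.dec, (q', x') =>
      1 ≤ x ∧ x' = x - 1 ∧ ∃ S, (q, S, Vis.dec, q') ∈ A.Δ ∧ x ∈ S
  | (q, x), Vis.sym (a, y), (q', x') =>
      y = x ∧ x' = x ∧ ∃ S, (q, S, Vis.sym a, q') ∈ A.Δ ∧ x ∈ S

/-- Partial runs of an eOCA, as for OCAs. -/
inductive EOCA.RunFrom (A : EOCA Q α) : Q × ℕ → List (Vis (α × ℕ)) → List (Q × ℕ) → Prop
  | nil (c : Q × ℕ) : EOCA.RunFrom A c [] [c]
  | cons {c c' : Q × ℕ} {τ : Vis (α × ℕ)} {ts : List (Vis (α × ℕ))} {cs : List (Q × ℕ)} :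
      A.step c τ c' → EOCA.RunFrom A c' ts cs → EOCA.RunFrom A c (τ :: ts) (c :: cs)

/-- Accepting traces of an eOCA: the last configuration `(q,x)` satisfies
`x ∈ f q`. -/
def EOCA.AccTrace (A : EOCA Q α) (ts : List (Vis (α × ℕ))) : Prop :=
  ∃ cs c, A.RunFrom (A.init, 0) ts cs ∧ cs.getLast? = some c ∧ c.2 ∈ A.f c.1

/-- The visibly semantics of an eOCA. -/
def EOCA.Lvis (A : EOCA Q α) : Set (List (Vis α)) :=
  {w | ∃ ts, A.AccTrace ts ∧ visMap ts = w}

/-- The observability semantics of an eOCA. -/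
def EOCA.Lobs (A : EOCA Q α) : Set (List (α × ℕ)) :=
  {w | ∃ ts, A.AccTrace ts ∧ obsMap ts = w}

/-- The classical semantics of an eOCA. -/
def EOCA.Loca (A : EOCA Q α) : Set (List α) :=
  {w | ∃ ts, A.AccTrace ts ∧ ocaMap ts = w}

/-- States of the constructed OCA. -/
inductive St19 (d : ℕ) (S : Type) : Type where
  | a : ZMod d → St19 d S
  | b : ZMod d → (S → S) → St19 d S
  | e : St19 d S

theorem St19.finite (d : ℕ) [NeZero d] (S : Type) [Finite S] : Finite (St19 d S) := by
  let g : St19 d S → (ZMod d) ⊕ ((ZMod d × (S → S)) ⊕ Unit) := fun q => match q with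
    | .a c => .inl c
    | .b c h => .inr (.inl (c, h))
    | .e => .inr (.inr ())
  refine Finite.of_injective g ?_
  intro p q hpq
  cases p <;> cases q <;> simp_all [g]

/-- Transitions of the constructed OCA. -/
inductive Tr19 (d t : ℕ) {S : Type} (f : S → S) (good : ℕ → (S → S) → Prop) :
    St19 d S → ℕ → Vis Bool → St19 d S → Prop where
  | inc (c : ZMod d) (k : ℕ) : Tr19 d t f good (.a c) k .inc (.a (c + 1))
  | b1 (c : ZMod d) (k : ℕ) : Tr19 d t f good (.a c) k (.sym true) (.b c id)
  | dec (c : ZMod d) (h : S → S) (k : ℕ) :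
      Tr19 d t f good (.b c h) k .dec (.b (c - 1) (f ∘ h))
  | b2 (x : ℕ) (h : S → S) (hg : good x h) :
      Tr19 d t f good (.b (x : ZMod d) h) (min x t) (.sym false) .e

/-- The constructed OCA. -/
def oca19 (d t : ℕ) {S : Type} (f : S → S) (good : ℕ → (S → S) → Prop) :
    OCA (St19 d S) Bool where
  init := .a 0
  final := {.e}
  m := t
  Δ := {z | z.2.1 ≤ t ∧ Tr19 d t f good z.1 z.2.1 z.2.2.1 z.2.2.2}
  valid := fun _ hz => hz.1

/-- Acceptance of a word from a configuration. -/
def Acc19 {K β : Type} (A : OCA K β) (c : K × ℕ) (w : List (Vis β)) : Prop :=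
  ∃ ts cs c', A.RunFrom c ts cs ∧ cs.getLast? = some c' ∧ c'.1 ∈ A.final ∧ visMap ts = w

theorem acc19_nil {K β : Type} (A : OCA K β) (c : K × ℕ) :
    Acc19 A c [] ↔ c.1 ∈ A.final := by
  constructor
  · rintro ⟨ts, cs, c', hr, hl, hf, hv⟩
    cases hr with
    | nil => simp at hl; subst hl; exact hf
    | cons => simp [visMap] at hv
  · intro h
    exact ⟨[], [c], c, .nil c, rfl, h, rfl⟩

theorem run19_ne {K β : Type} {A : OCA K β} {c : K × ℕ} {ts cs} (h : A.RunFrom c ts cs) :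
    cs ≠ [] := by
  cases h <;> simp

theorem acc19_cons {K β : Type} (A : OCA K β) (c : K × ℕ) (σ : Vis β) (w : List (Vis β)) :
    Acc19 A c (σ :: w) ↔ ∃ τ c', visOf τ = σ ∧ A.step c τ c' ∧ Acc19 A c' w := by
  constructor
  · rintro ⟨ts, cs, c', hr, hl, hf, hv⟩
    cases hr with
    | nil => simp [visMap] at hv
    | @cons _ c1 τ ts cs hs hr =>
      simp only [visMap, List.map_cons, List.cons.injEq] at hv
      refine ⟨τ, c1, hv.1, hs, ts, cs, c', hr, ?_, hf, hv.2⟩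
      have := run19_ne hr
      obtain ⟨z, zs, rfl⟩ := List.exists_cons_of_ne_nil this
      simpa [List.getLast?_cons_cons] using hl
  · rintro ⟨τ, c1, hv, hs, ts, cs, c', hr, hl, hf, rfl⟩
    refine ⟨τ :: ts, c :: cs, c', .cons hs hr, ?_, hf, by simp [visMap, hv]⟩
    obtain ⟨z, zs, rfl⟩ := List.exists_cons_of_ne_nil (run19_ne hr)
    simpa [List.getLast?_cons_cons] using hl

theorem acc19_inc {K β : Type} (A : OCA K β) (q : K) (x : ℕ) (w : List (Vis β)) :
    Acc19 A (q, x) (.inc :: w) ↔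
      ∃ q', (q, min x A.m, Vis.inc, q') ∈ A.Δ ∧ Acc19 A (q', x + 1) w := by
  rw [acc19_cons]
  constructor
  · rintro ⟨τ, ⟨q', x'⟩, hv, hs, ha⟩
    rcases τ with ⟨a, y⟩ | _ | _ <;> simp [visOf] at hv
    obtain ⟨rfl, h⟩ := hs
    exact ⟨q', h, ha⟩
  · rintro ⟨q', h, ha⟩
    exact ⟨.inc, (q', x + 1), rfl, ⟨rfl, h⟩, ha⟩

theorem acc19_dec {K β : Type} (A : OCA K β) (q : K) (x : ℕ) (w : List (Vis β)) :
    Acc19 A (q, x) (.dec :: w) ↔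
      1 ≤ x ∧ ∃ q', (q, min x A.m, Vis.dec, q') ∈ A.Δ ∧ Acc19 A (q', x - 1) w := by
  rw [acc19_cons]
  constructor
  · rintro ⟨τ, ⟨q', x'⟩, hv, hs, ha⟩
    rcases τ with ⟨a, y⟩ | _ | _ <;> simp [visOf] at hv
    obtain ⟨h1, rfl, h⟩ := hs
    exact ⟨h1, q', h, ha⟩
  · rintro ⟨h1, q', h, ha⟩
    exact ⟨.dec, (q', x - 1), rfl, ⟨h1, rfl, h⟩, ha⟩

theorem acc19_sym {K β : Type} (A : OCA K β) (q : K) (x : ℕ) (a : β) (w : List (Vis β)) :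
    Acc19 A (q, x) (.sym a :: w) ↔
      ∃ q', (q, min x A.m, Vis.sym a, q') ∈ A.Δ ∧ Acc19 A (q', x) w := by
  rw [acc19_cons]
  constructor
  · rintro ⟨τ, ⟨q', x'⟩, hv, hs, ha⟩
    rcases τ with ⟨b, y⟩ | _ | _ <;> simp [visOf] at hv
    obtain ⟨rfl, rfl, h⟩ := hs
    subst hv
    exact ⟨q', h, ha⟩
  · rintro ⟨q', h, ha⟩
    exact ⟨.sym (a, x), (q', x), rfl, ⟨rfl, rfl, h⟩, ha⟩

section
variable {d t : ℕ} {S : Type} {f : S → S} {good : ℕ → (S → S) → Prop}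

theorem acc19_e (x : ℕ) (w : List (Vis Bool)) :
    Acc19 (oca19 d t f good) (.e, x) w ↔ w = [] := by
  rcases w with _ | ⟨σ, w⟩
  · simp [acc19_nil, oca19]
  · simp only [reduceCtorEq, iff_false]
    rcases σ with a | _ | _
    · rw [acc19_sym]; rintro ⟨q', ⟨_, h⟩, _⟩; cases h
    · rw [acc19_inc]; rintro ⟨q', ⟨_, h⟩, _⟩; cases h
    · rw [acc19_dec]; rintro ⟨_, q', ⟨_, h⟩, _⟩; cases h

theorem acc19_b (hgood : ∀ x x' h, min x t = min x' t → (x : ZMod d) = x' →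
      good x h → good x' h) (w : List (Vis Bool)) : ∀ (x : ℕ) (h : S → S),
    Acc19 (oca19 d t f good) (.b (x : ZMod d) h, x) w ↔
      ∃ y z, y + z = x ∧ w = List.replicate y Vis.dec ++ [Vis.sym false] ∧
        good z (f^[y] ∘ h) := by
  induction w with
  | nil => intro x h; simp [acc19_nil, oca19]
  | cons σ w ih =>
    intro x h
    rcases σ with a | _ | _
    · rw [acc19_sym]
      constructor
      · rintro ⟨q', ⟨_, hT⟩, ha⟩
        dsimp only at hT
        generalize hc : (x : ZMod d) = c at hT
        generalize hk : min x (oca19 d t f good).m = k at hT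
        cases hT with
        | b2 x' _ hg =>
          rw [acc19_e] at ha
          subst ha
          exact ⟨0, x, by simp, by simp, hgood _ _ _ hk.symm hc.symm hg⟩
      · rintro ⟨y, z, hx, hw, hg⟩
        rcases y with _ | y
        · simp at hw hx
          obtain ⟨rfl, rfl⟩ := hw
          subst hx
          exact ⟨.e, ⟨min_le_right _ _, .b2 _ _ hg⟩, (acc19_e _ _).2 rfl⟩
        · simp [List.replicate_succ] at hw
    · rw [acc19_inc]
      constructor
      · rintro ⟨q', ⟨_, hT⟩, _⟩
        dsimp only at hT
        generalize (x : ZMod d) = c at hT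
        generalize min x (oca19 d t f good).m = k at hT
        cases hT
      · rintro ⟨y, z, hx, hw, hg⟩
        rcases y with _ | y <;> simp [List.replicate_succ] at hw
    · rw [acc19_dec]
      constructor
      · rintro ⟨h1, q', ⟨_, hT⟩, ha⟩
        dsimp only at hT
        generalize hc : (x : ZMod d) = c at hT
        generalize min x (oca19 d t f good).m = k at hT
        cases hT
        subst hc
        obtain ⟨x, rfl⟩ : ∃ x', x = x' + 1 := ⟨x - 1, by omega⟩
        have e : ((x + 1 : ℕ) : ZMod d) - 1 = (x : ZMod d) := by push_cast; ring
        rw [e, Nat.add_sub_cancel, ih] at ha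
        obtain ⟨y, z, hx, hw, hg⟩ := ha
        exact ⟨y + 1, z, by omega, by simp [hw, List.replicate_succ], by
          rwa [Function.iterate_succ]⟩
      · rintro ⟨y, z, hx, hw, hg⟩
        rcases y with _ | y
        · simp at hw
        · obtain ⟨x, rfl⟩ : ∃ x', x = x' + 1 := ⟨x - 1, by omega⟩
          have e : ((x + 1 : ℕ) : ZMod d) - 1 = (x : ZMod d) := by push_cast; ring
          refine ⟨by omega, _, ⟨min_le_right _ _, .dec _ _ _⟩, ?_⟩
          rw [e, Nat.add_sub_cancel, ih]
          refine ⟨y, z, by omega, by simpa [List.replicate_succ] using hw, ?_⟩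
          rwa [Function.iterate_succ] at hg

theorem acc19_a (hgood : ∀ x x' h, min x t = min x' t → (x : ZMod d) = x' →
      good x h → good x' h) (w : List (Vis Bool)) : ∀ (x : ℕ),
    Acc19 (oca19 d t f good) (.a (x : ZMod d), x) w ↔
      ∃ n y z, y + z = x + n ∧ w = List.replicate n Vis.inc ++ Vis.sym true ::
        (List.replicate y Vis.dec ++ [Vis.sym false]) ∧ good z (f^[y]) := by
  induction w with
  | nil => intro x; simp [acc19_nil, oca19]
  | cons σ w ih =>
    intro x
    rcases σ with a | _ | _
    · rw [acc19_sym]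
      constructor
      · rintro ⟨q', ⟨_, hT⟩, ha⟩
        cases hT
        rw [acc19_b hgood] at ha
        obtain ⟨y, z, hx, hw, hg⟩ := ha
        exact ⟨0, y, z, by omega, by simp [hw], hg⟩
      · rintro ⟨n, y, z, hx, hw, hg⟩
        rcases n with _ | n
        · simp at hw hx
          obtain ⟨rfl, rfl⟩ := hw
          exact ⟨_, ⟨min_le_right _ _, .b1 _ _⟩, (acc19_b hgood _ _ _).2 ⟨y, z, hx, rfl, hg⟩⟩
        · simp [List.replicate_succ] at hw
    · rw [acc19_inc]
      have e : (x : ZMod d) + 1 = ((x + 1 : ℕ) : ZMod d) := by push_cast; ring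
      constructor
      · rintro ⟨q', ⟨_, hT⟩, ha⟩
        cases hT
        rw [e, ih] at ha
        obtain ⟨n, y, z, hx, hw, hg⟩ := ha
        exact ⟨n + 1, y, z, by omega, by simp [hw, List.replicate_succ], hg⟩
      · rintro ⟨n, y, z, hx, hw, hg⟩
        rcases n with _ | n
        · simp at hw
        · refine ⟨_, ⟨min_le_right _ _, .inc _ _⟩, ?_⟩
          rw [e, ih]
          exact ⟨n, y, z, by omega, by simpa [List.replicate_succ] using hw, hg⟩
    · rw [acc19_dec]
      constructor
      · rintro ⟨_, q', ⟨_, h⟩, _⟩; cases h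
      · rintro ⟨n, y, z, hx, hw, hg⟩
        rcases n with _ | n <;> simp [List.replicate_succ] at hw

end

theorem ultper19 {S : Type} [Finite S] (f : S → S) (s : S) : ∃ t d : ℕ, d ≠ 0 ∧
    ∀ x x' : ℕ, min x t = min x' t → (x : ZMod d) = x' → f^[x] s = f^[x'] s := by
  obtain ⟨i, j, hij, he⟩ := Finite.exists_ne_map_eq_of_infinite (fun n : ℕ => f^[n] s)
  wlog hlt : i < j generalizing i j
  · exact this j i hij.symm he.symm (by omega)
  refine ⟨i, j - i, by omega, ?_⟩
  have hper : ∀ k n, i ≤ n → f^[n + (j - i) * k] s = f^[n] s := by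
    intro k
    induction k with
    | zero => intro n _; simp
    | succ k ih =>
      intro n hn
      have : n + (j - i) * (k + 1) = (n + (j - i)) + (j - i) * k := by ring
      rw [this, ih _ (by omega)]
      obtain ⟨r, rfl⟩ := Nat.exists_eq_add_of_le hn
      have h2 : i + r + (j - i) = r + j := by omega
      rw [h2, Function.iterate_add_apply, ← he, ← Function.iterate_add_apply, add_comm]
  intro x x' hm hz
  wlog hle : x ≤ x' generalizing x x'
  · exact (this x' x hm.symm hz.symm (by omega)).symm
  rcases Nat.lt_or_ge x i with h | h
  · have : x = x' := by omega
    rw [this]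
  · rw [ZMod.natCast_eq_natCast_iff, Nat.modEq_iff_dvd' hle] at hz
    obtain ⟨k, hk⟩ := hz
    have : x' = x + (j - i) * k := by omega
    rw [this, hper _ _ h]

theorem evalFrom19 {S : Type} (M : DFA (Fin 3) S) (s : S) (x : ℕ) :
    M.evalFrom s (List.replicate x 0) = (fun s => M.step s 0)^[x] s := by
  induction x generalizing s with
  | zero => simp
  | succ n ih => simp [List.replicate_succ, DFA.evalFrom_cons, ih]

/-- from a regular language `R ⊆ {□^x b2 □^y b1}` (over the
three-letter alphabet `Fin 3`, with `□ := 0`, `b2 := 1`, `b1 := 2`) one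
obtains an OCA over the two-letter alphabet `Bool` (with `b1 := true`,
`b2 := false`) whose visibly semantics is
`{inc^(x+y) b1 dec^y b2 : □^x b2 □^y b1 ∈ R}`. -/
theorem stmt19 (R : Language (Fin 3))
    (hreg : ∃ (S : Type) (_ : Fintype S) (M : DFA (Fin 3) S), M.accepts = R)
    (hR : ∀ w ∈ R, ∃ x y : ℕ,
        w = List.replicate x (0 : Fin 3) ++ [1] ++ List.replicate y 0 ++ [2]) :
    ∃ (Q : Type) (_ : Fintype Q) (C : OCA Q Bool),
      C.Lvis = {w | ∃ x y : ℕ,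
        (List.replicate x (0 : Fin 3) ++ [1] ++ List.replicate y 0 ++ [2]) ∈ R ∧
        w = List.replicate (x + y) Vis.inc ++ Vis.sym true ::
            (List.replicate y Vis.dec ++ [Vis.sym false])} := by
  obtain ⟨S, _, M, rfl⟩ := hreg
  obtain ⟨t, d, hd, hper⟩ := ultper19 (fun s => M.step s 0) M.start
  haveI : NeZero d := ⟨hd⟩
  haveI := St19.finite d S
  let good : ℕ → (S → S) → Prop := fun x h =>
    M.step (h (M.step ((fun s => M.step s 0)^[x] M.start) 1)) 2 ∈ M.accept
  have hgood : ∀ x x' h, min x t = min x' t → (x : ZMod d) = x' → good x h → good x' h := by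
    intro x x' h h1 h2 hg
    simp only [good] at hg ⊢
    rwa [← hper x x' h1 h2]
  refine ⟨St19 d S, Fintype.ofFinite _, oca19 d t (fun s => M.step s 0) good, ?_⟩
  have hmem : ∀ x y : ℕ,
      (List.replicate x (0 : Fin 3) ++ [1] ++ List.replicate y 0 ++ [2]) ∈ M.accepts ↔
        good x ((fun s => M.step s 0)^[y]) := by
    intro x y
    simp [good, DFA.mem_accepts, DFA.eval, DFA.evalFrom_of_append, evalFrom19,
      DFA.evalFrom_cons]
  ext w
  have h1 : w ∈ (oca19 d t (fun s => M.step s 0) good).Lvis ↔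
      Acc19 (oca19 d t (fun s => M.step s 0) good) (.a ((0 : ℕ) : ZMod d), 0) w := by
    simp only [OCA.Lvis, OCA.AccTrace, Acc19, Set.mem_setOf_eq, Nat.cast_zero]
    constructor
    · rintro ⟨ts, ⟨cs, c, h1, h2, h3⟩, h4⟩
      exact ⟨ts, cs, c, h1, h2, h3, h4⟩
    · rintro ⟨ts, cs, c, h1, h2, h3, h4⟩
      exact ⟨ts, ⟨cs, c, h1, h2, h3⟩, h4⟩
  rw [h1, acc19_a hgood]
  simp only [Set.mem_setOf_eq, hmem]
  constructor
  · rintro ⟨n, y, z, hx, hw, hg⟩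
    have : n = z + y := by omega
    subst this
    exact ⟨z, y, hg, hw⟩
  · rintro ⟨x, y, hg, hw⟩
    exact ⟨x + y, y, x, by omega, hw, hg⟩
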